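/- arXiv:1912.09181 — 4 statements merged into one kernel-verified Lean document; each statement's English description precedes it below -/
import Mathlib

section
/- Let (i, j, k) be a permutation of (1, 2, 3). If Φ = (φ₁, φ₂, φ₃) ∈ ℝ³ satisfies φ_k = 0, φ_i + φ_j = 1 and φ_i ∈ (−δ, 1+δ), then W(Φ) = (Σ_i + Σ_j)·W_dw(φ_i), i.e. on the binary edge between pure phases i and j the triple-well potential reduces to the scaled double-well potential. -/
/-- The cutoff function ℓ. -/
noncomputable def ell (x : ℝ) : ℝ := if x < 0 then x ^ 2 / (1 + x) else 0

/-- The double-well potential. -/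
noncomputable def Wdw (δ φ : ℝ) : ℝ :=
  18 * φ ^ 2 * (1 - φ) ^ 2 + δ * ell (φ / δ) + δ * ell ((1 - φ) / δ)

/-- Σ_T = (Σ₁⁻¹ + Σ₂⁻¹ + Σ₃⁻¹)⁻¹. -/
noncomputable def SigT (S : Fin 3 → ℝ) : ℝ := ((S 0)⁻¹ + (S 1)⁻¹ + (S 2)⁻¹)⁻¹

/-- The projection P(Φ) = Φ + Σ_T(1 − φ₁ − φ₂ − φ₃)(Σ₁⁻¹, Σ₂⁻¹, Σ₃⁻¹). -/
noncomputable def Pproj (S : Fin 3 → ℝ) (Φ : Fin 3 → ℝ) : Fin 3 → ℝ :=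
  fun m => Φ m + SigT S * (1 - (Φ 0 + Φ 1 + Φ 2)) * (S m)⁻¹

/-- The triple-well potential W₀(Ψ) = Σ₁W_dw(ψ₁) + Σ₂W_dw(ψ₂) + Σ₃W_dw(ψ₃). -/
noncomputable def W0 (δ : ℝ) (S : Fin 3 → ℝ) (Ψ : Fin 3 → ℝ) : ℝ :=
  S 0 * Wdw δ (Ψ 0) + S 1 * Wdw δ (Ψ 1) + S 2 * Wdw δ (Ψ 2)

/-- W(Φ) = W₀(P(Φ)). -/
noncomputable def Wtriple (δ : ℝ) (S : Fin 3 → ℝ) (Φ : Fin 3 → ℝ) : ℝ := W0 δ S (Pproj S Φ)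

/-- on the binary edge between pure phases i and j (with phase k absent),
the triple-well potential reduces to the scaled double-well potential. -/
theorem Wtriple_binary_edge (δ : ℝ) (hδ : δ ∈ Set.Ioo (0 : ℝ) (1 / 2))
    (S : Fin 3 → ℝ) (hS : ∀ m, 0 < S m)
    (i j k : Fin 3) (hij : i ≠ j) (hik : i ≠ k) (hjk : j ≠ k)
    (Φ : Fin 3 → ℝ) (hk : Φ k = 0) (hsum : Φ i + Φ j = 1)
    (hmem : Φ i ∈ Set.Ioo (-δ) (1 + δ)) :
    Wtriple δ S Φ = (S i + S j) * Wdw δ (Φ i) := by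
  have hδ0 : 0 < δ := hδ.1
  have hzero : Wdw δ 0 = 0 := by
    have h1 : ¬ ((1 : ℝ) / δ < 0) := not_lt.mpr (by positivity)
    simp only [Wdw, ell, sub_zero, zero_div, lt_irrefl, if_false, if_neg h1]
    ring
  have hsymm : ∀ x : ℝ, Wdw δ (1 - x) = Wdw δ x := by
    intro x
    simp only [Wdw, sub_sub_cancel]
    ring
  -- sums over the three indices can be reordered
  have hperm : ∀ f : Fin 3 → ℝ, f 0 + f 1 + f 2 = f i + f j + f k := by
    intro f
    fin_cases i <;> fin_cases j <;> fin_cases k <;> simp at hij hik hjk ⊢ <;> ring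
  have htot : Φ 0 + Φ 1 + Φ 2 = 1 := by
    rw [hperm Φ, hk, hsum, add_zero]
  have hP : Pproj S Φ = Φ := by
    funext m
    simp [Pproj, htot]
  have hj : Φ j = 1 - Φ i := by linarith
  rw [Wtriple, hP, W0, hperm (fun m => S m * Wdw δ (Φ m))]
  simp only [hk, hj, hzero, hsymm]
  ring
end

section
/- (Algebraic consistency.) Let (i, j, k) be a permutation of (1, 2, 3) and let Φ = (φ₁, φ₂, φ₃) ∈ ℝ³ satisfy φ_i = 0, φ_j + φ_k = 1 and φ_j ∈ (−δ, 1+δ). Then the partial derivatives of W = W₀ ∘ P at Φ satisfy ∂_{φ_i}W(Φ) = 0 and ∂_{φ_j}W(Φ) = Σ_j·W_dw'(φ_j). In particular, the chemical potential of an absent phase vanishes, and on a binary edge the remaining potential reduces to the scaled double-well derivative. -/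
theorem ell_hasDerivAt_zero : HasDerivAt ell 0 0 := by
  have h1 : HasDerivAt (fun x : ℝ => x ^ 2 / (1 + x)) 0 0 := by
    have := ((hasDerivAt_id (0:ℝ)).pow 2).div ((hasDerivAt_id (0:ℝ)).const_add 1) (by simp)
    refine (this.congr_deriv (by simp)).congr_of_eventuallyEq (Filter.Eventually.of_forall ?_)
    intro x
    simp
  have h2 : HasDerivWithinAt ell 0 (Set.Iic 0) 0 := by
    refine h1.hasDerivWithinAt.congr ?_ (by simp [ell])
    intro x hx
    rcases lt_or_eq_of_le (Set.mem_Iic.1 hx) with h | h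
    · simp [ell, h]
    · simp [ell, h]
  have h3 : HasDerivWithinAt ell 0 (Set.Ici 0) 0 := by
    refine (hasDerivAt_const (0:ℝ) (0:ℝ)).hasDerivWithinAt.congr ?_ (by simp [ell])
    intro x hx
    simp [ell, not_lt.2 (Set.mem_Ici.1 hx)]
  have := h2.union h3
  rw [Set.Iic_union_Ici] at this
  exact hasDerivWithinAt_univ.1 this

theorem ell_hasDerivAt_pos {x : ℝ} (hx : 0 < x) : HasDerivAt ell 0 x := by
  refine (hasDerivAt_const x (0:ℝ)).congr_of_eventuallyEq ?_
  filter_upwards [lt_mem_nhds hx] with y hy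
  simp [ell, hy.le]

theorem ell_differentiableAt {x : ℝ} (hx : -1 < x) : DifferentiableAt ℝ ell x := by
  rcases lt_trichotomy x 0 with h | h | h
  · have h1 : DifferentiableAt ℝ (fun x : ℝ => x ^ 2 / (1 + x)) x := by
      have : 1 + x ≠ 0 := by linarith
      fun_prop (disch := assumption)
    refine h1.congr_of_eventuallyEq ?_
    filter_upwards [gt_mem_nhds h] with y hy
    simp [ell, hy]
  · subst h
    exact ell_hasDerivAt_zero.differentiableAt
  · exact (ell_hasDerivAt_pos h).differentiableAt

theorem Wdw_differentiableAt {δ x : ℝ} (hδ : 0 < δ) (h1 : -δ < x) (h2 : x < 1 + δ) :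
    DifferentiableAt ℝ (Wdw δ) x := by
  have a : DifferentiableAt ℝ (fun y => ell (y / δ)) x := by
    have : DifferentiableAt ℝ ell (x / δ) :=
      ell_differentiableAt (by rw [lt_div_iff₀ hδ]; linarith)
    exact DifferentiableAt.comp (f := fun y : ℝ => y / δ) x this (by fun_prop)
  have b : DifferentiableAt ℝ (fun y => ell ((1 - y) / δ)) x := by
    have : DifferentiableAt ℝ ell ((1 - x) / δ) :=
      ell_differentiableAt (by rw [lt_div_iff₀ hδ]; linarith)
    exact DifferentiableAt.comp (f := fun y : ℝ => (1 - y) / δ) x this (by fun_prop)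
  unfold Wdw
  fun_prop

theorem Wdw_hasDerivAt_zero {δ : ℝ} (hδ : 0 < δ) : HasDerivAt (Wdw δ) 0 0 := by
  have a : HasDerivAt (fun y => ell (y / δ)) (0 * (1 / δ)) 0 := by
    have : HasDerivAt ell 0 ((0:ℝ) / δ) := by simpa using ell_hasDerivAt_zero
    exact HasDerivAt.comp (h := fun y : ℝ => y / δ) (0:ℝ) this ((hasDerivAt_id (0:ℝ)).div_const δ)
  have b : HasDerivAt (fun y => ell ((1 - y) / δ)) (0 * ((-1) / δ)) 0 := by
    have : HasDerivAt ell 0 ((1 - (0:ℝ)) / δ) := ell_hasDerivAt_pos (by simpa using hδ)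
    exact HasDerivAt.comp (h := fun y : ℝ => (1 - y) / δ) (0:ℝ) this
      (((hasDerivAt_id (0:ℝ)).const_sub 1).div_const δ)
  have c : HasDerivAt (fun y : ℝ => 18 * y ^ 2 * (1 - y) ^ 2) 0 0 := by
    have := (((hasDerivAt_id (0:ℝ)).pow 2).const_mul 18).mul
      (((hasDerivAt_id (0:ℝ)).const_sub 1).pow 2)
    refine (this.congr_deriv (by simp)).congr_of_eventuallyEq (Filter.Eventually.of_forall ?_)
    intro x
    simp
  exact ((c.add (a.const_mul δ)).add (b.const_mul δ)).congr_deriv (by simp)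

theorem Wdw_symm (δ x : ℝ) : Wdw δ (1 - x) = Wdw δ x := by
  unfold Wdw
  rw [sub_sub_cancel]
  ring

theorem deriv_Wdw_symm (δ x : ℝ) : deriv (Wdw δ) (1 - x) = - deriv (Wdw δ) x := by
  have h : (fun y => Wdw δ (1 - y)) = Wdw δ := funext (Wdw_symm δ)
  have := deriv_comp_const_sub (f := Wdw δ) 1 x
  rw [h] at this
  linarith

theorem Wtriple_partial (δ : ℝ) (S : Fin 3 → ℝ) (hS : ∀ m, 0 < S m) (Φ : Fin 3 → ℝ)
    (h1 : Φ 0 + Φ 1 + Φ 2 = 1) (hd : ∀ m, DifferentiableAt ℝ (Wdw δ) (Φ m)) (i : Fin 3) :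
    HasDerivAt (fun t => Wtriple δ S (Function.update Φ i t))
      (S i * deriv (Wdw δ) (Φ i) - SigT S *
        (deriv (Wdw δ) (Φ 0) + deriv (Wdw δ) (Φ 1) + deriv (Wdw δ) (Φ 2))) (Φ i) := by
  have hu : ∀ m, HasDerivAt (fun t => Function.update Φ i t m) (if m = i then 1 else 0) (Φ i) := by
    intro m
    by_cases h : m = i
    · subst h; simpa using hasDerivAt_id' (Φ m)
    · simpa [h] using hasDerivAt_const (Φ i) (Φ m)
  have hs : HasDerivAt (fun t => Function.update Φ i t 0 + Function.update Φ i t 1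
      + Function.update Φ i t 2) 1 (Φ i) := by
    refine (((hu 0).add (hu 1)).add (hu 2)).congr_deriv ?_
    fin_cases i <;> simp
  have hp : ∀ m, HasDerivAt (fun t => Pproj S (Function.update Φ i t) m)
      ((if m = i then 1 else 0) + SigT S * (-1) * (S m)⁻¹) (Φ i) := by
    intro m
    exact (hu m).add (((hs.const_sub 1).const_mul (SigT S)).mul_const (S m)⁻¹)
  have hw : ∀ m, HasDerivAt (fun t => S m * Wdw δ (Pproj S (Function.update Φ i t) m))
      (S m * (deriv (Wdw δ) (Φ m) * ((if m = i then 1 else 0) + SigT S * (-1) * (S m)⁻¹)))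
      (Φ i) := by
    intro m
    refine HasDerivAt.const_mul (S m) ?_
    have e : Pproj S (Function.update Φ i (Φ i)) m = Φ m := by
      simp [Pproj, h1]
    refine HasDerivAt.comp (h₂ := Wdw δ) (h := fun t => Pproj S (Function.update Φ i t) m) (Φ i) ?_ (hp m)
    simp only [e]
    exact (hd m).hasDerivAt
  refine (((hw 0).add (hw 1)).add (hw 2)).congr_deriv ?_
  have e0 := (hS 0).ne'
  have e1 := (hS 1).ne'
  have e2 := (hS 2).ne'
  generalize SigT S = T
  fin_cases i <;> simp <;> field_simp <;> ring

/-- algebraic consistency: if phase i is absent and φ_j + φ_k = 1, then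
∂_{φ_i}W(Φ) = 0 and ∂_{φ_j}W(Φ) = Σ_j·W_dw'(φ_j). -/
theorem Wtriple_algebraic_consistency (δ : ℝ) (hδ : δ ∈ Set.Ioo (0 : ℝ) (1 / 2))
    (S : Fin 3 → ℝ) (hS : ∀ m, 0 < S m)
    (i j k : Fin 3) (hij : i ≠ j) (hik : i ≠ k) (hjk : j ≠ k)
    (Φ : Fin 3 → ℝ) (hi : Φ i = 0) (hsum : Φ j + Φ k = 1)
    (hmem : Φ j ∈ Set.Ioo (-δ) (1 + δ)) :
    HasDerivAt (fun t => Wtriple δ S (Function.update Φ i t)) 0 (Φ i) ∧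
    HasDerivAt (fun t => Wtriple δ S (Function.update Φ j t))
      (S j * deriv (Wdw δ) (Φ j)) (Φ j) := by
  have hδ0 := hδ.1
  have hk : Φ k = 1 - Φ j := by linarith
  have hperm : ∀ f : Fin 3 → ℝ, f 0 + f 1 + f 2 = f i + f j + f k := by
    intro f
    fin_cases i <;> fin_cases j <;> fin_cases k <;> simp at hij hik hjk ⊢ <;> ring
  have hall : ∀ m, m = i ∨ m = j ∨ m = k := by
    intro m
    clear hperm hk hmem hsum hi
    revert i j k m
    decide
  have h1 : Φ 0 + Φ 1 + Φ 2 = 1 := by rw [hperm Φ]; linarith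
  have hd : ∀ m, DifferentiableAt ℝ (Wdw δ) (Φ m) := by
    intro m
    have h2 := hmem.1
    have h3 := hmem.2
    rcases hall m with h | h | h <;> subst h <;>
      apply Wdw_differentiableAt hδ0 <;> linarith
  have hD : deriv (Wdw δ) (Φ 0) + deriv (Wdw δ) (Φ 1) + deriv (Wdw δ) (Φ 2) = 0 := by
    rw [hperm (fun m => deriv (Wdw δ) (Φ m))]
    simp only [hk, hi, deriv_Wdw_symm, (Wdw_hasDerivAt_zero hδ0).deriv]
    ring
  have hDi : deriv (Wdw δ) (Φ i) = 0 := by rw [hi, (Wdw_hasDerivAt_zero hδ0).deriv]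
  refine ⟨(Wtriple_partial δ S hS Φ h1 hd i).congr_deriv ?_,
    (Wtriple_partial δ S hS Φ h1 hd j).congr_deriv ?_⟩
  · rw [hD, hDi]; ring
  · rw [hD]; ring
end

section
/- (Navier-slip condition.) Let γ₁, γ₃, ρ₃, d₀ > 0 and set λ = √(ρ₃d₀/(2γ₃)). Suppose v : ℝ → ℝ is twice differentiable and bounded on (−∞, 0], satisfies 2γ₃·v''(x) − ρ₃d₀·v(x) = 0 for all x ≤ 0, and suppose w : ℝ → ℝ is differentiable at 0 with w(0) = v(0) (continuity of the velocity across the interface) and γ₁·w'(0) = γ₃·v'(0) (zero jump of tangential stress). Then w(0) = L·w'(0) with slip length L = γ₁·√(2/(ρ₃d₀γ₃)). -/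
/-- A function with vanishing derivative on the closed half-line is constant there. -/
lemma const_on_Iic (f : ℝ → ℝ) (hf : ∀ x ≤ (0 : ℝ), HasDerivWithinAt f 0 (Set.Iic 0) x)
    (x : ℝ) (hx : x ≤ 0) : f x = f 0 := by
  have h := (convex_Iic (0 : ℝ)).norm_image_sub_le_of_norm_hasDerivWithin_le
    (f := f) (f' := fun _ => 0) (C := 0) (x := 0) (y := x)
    (fun y hy => hf y hy) (fun y _ => by simp) (by simp) hx
  rw [zero_mul] at h
  exact sub_eq_zero.mp (norm_le_zero_iff.mp h)

/-- A conserved quantity of the second order linear equation. -/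
lemma conserved (l : ℝ) (v dv ddv : ℝ → ℝ)
    (hv : ∀ x ≤ (0 : ℝ), HasDerivWithinAt v (dv x) (Set.Iic 0) x)
    (hdv : ∀ x ≤ (0 : ℝ), HasDerivWithinAt dv (ddv x) (Set.Iic 0) x)
    (hode : ∀ x ≤ (0 : ℝ), ddv x = l ^ 2 * v x) (x : ℝ) (hx : x ≤ 0) :
    (l * v x - dv x) * Real.exp (l * x) = l * v 0 - dv 0 := by
  have h := const_on_Iic (fun x => (l * v x - dv x) * Real.exp (l * x)) (fun y hy => by
    have he : HasDerivWithinAt (fun x => Real.exp (l * x)) (Real.exp (l * y) * (l * 1))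
        (Set.Iic 0) y := (((hasDerivAt_id y).const_mul l).exp).hasDerivWithinAt
    have h1 := (((hv y hy).const_mul l).sub (hdv y hy)).mul he
    refine h1.congr_deriv ?_
    simp only [Pi.sub_apply]
    rw [hode y hy]; ring) x hx
  simpa using h

/-- Navier-slip condition: a bounded solution of the elliptic law in the solid,
coupled to the fluid tangential velocity w by continuity of velocity and of tangential stress,
satisfies the Navier-slip condition w(0) = L·w'(0) with slip length L = γ₁√(2/(ρ₃d₀γ₃)). -/
theorem navier_slip_condition (γ₁ γ₃ ρ₃ d₀ : ℝ)
    (hγ₁ : 0 < γ₁) (hγ₃ : 0 < γ₃) (hρ : 0 < ρ₃) (hd : 0 < d₀)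
    (lam : ℝ) (hlam : lam = Real.sqrt (ρ₃ * d₀ / (2 * γ₃)))
    (v dv ddv : ℝ → ℝ)
    (hv : ∀ x ≤ (0 : ℝ), HasDerivWithinAt v (dv x) (Set.Iic 0) x)
    (hdv : ∀ x ≤ (0 : ℝ), HasDerivWithinAt dv (ddv x) (Set.Iic 0) x)
    (hbd : ∃ M : ℝ, ∀ x ≤ (0 : ℝ), |v x| ≤ M)
    (hode : ∀ x ≤ (0 : ℝ), 2 * γ₃ * ddv x - ρ₃ * d₀ * v x = 0)
    (w : ℝ → ℝ) (dw0 : ℝ) (hw : HasDerivAt w dw0 0)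
    (hcont : w 0 = v 0)
    (hstress : γ₁ * dw0 = γ₃ * dv 0) :
    w 0 = (γ₁ * Real.sqrt (2 / (ρ₃ * d₀ * γ₃))) * dw0 := by
  obtain ⟨M, hM⟩ := hbd
  have hl : 0 < lam := by rw [hlam]; positivity
  have hl2 : lam ^ 2 = ρ₃ * d₀ / (2 * γ₃) := by rw [hlam]; exact Real.sq_sqrt (by positivity)
  have hode' : ∀ x ≤ (0 : ℝ), ddv x = lam ^ 2 * v x := fun x hx => by
    have := hode x hx
    rw [hl2]; field_simp; linarith
  have key : lam * v 0 - dv 0 = 0 := by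
    by_contra hA
    have hApos : 0 < |lam * v 0 - dv 0| := abs_pos.mpr hA
    set A := lam * v 0 - dv 0 with hAdef
    set B := -lam * v 0 - dv 0 with hBdef
    have hM0 : 0 ≤ M := (abs_nonneg _).trans (hM 0 le_rfl)
    set K := 2 * lam * M + |B| with hK
    have hK0 : 0 ≤ K := by positivity
    set y := K / (lam * |A|) with hy
    have hy0 : 0 ≤ y := by positivity
    have hx : -y ≤ 0 := by linarith
    have c1 := conserved lam v dv ddv hv hdv hode' (-y) hx
    have c2 := conserved (-lam) v dv ddv hv hdv
      (fun x hx => by rw [hode' x hx]; ring) (-y) hx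
    rw [← hAdef, show lam * -y = -(lam * y) by ring, Real.exp_neg] at c1
    rw [← hBdef, show -lam * -y = lam * y by ring] at c2
    have hge := Real.add_one_le_exp (lam * y)
    have hE := Real.exp_pos (lam * y)
    set E := Real.exp (lam * y)
    have c3 : A * E = lam * v (-y) - dv (-y) := by rw [← c1]; field_simp
    have hE1 : 1 ≤ E := by nlinarith [mul_nonneg hl.le hy0]
    have hB : |-lam * v (-y) - dv (-y)| ≤ |B| := by
      rw [← c2, abs_mul, abs_of_pos hE]
      exact le_mul_of_one_le_right (abs_nonneg _) hE1
    have hAE : |A| * E ≤ K := by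
      rw [← abs_of_pos hE, ← abs_mul, c3,
        show lam * v (-y) - dv (-y) = 2 * lam * v (-y) + (-lam * v (-y) - dv (-y)) by ring]
      refine (abs_add_le _ _).trans (add_le_add ?_ hB)
      rw [abs_mul, abs_of_pos (by positivity : 0 < 2 * lam)]
      exact mul_le_mul_of_nonneg_left (hM _ hx) (by positivity)
    have hyK : |A| * (lam * y) = K := by rw [hy]; field_simp
    nlinarith [mul_le_mul_of_nonneg_left hge hApos.le]
  have hs : γ₃ * Real.sqrt (2 / (ρ₃ * d₀ * γ₃)) = 1 / lam := by
    have h1 : 0 ≤ γ₃ * Real.sqrt (2 / (ρ₃ * d₀ * γ₃)) := by positivity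
    have h2 : 0 ≤ 1 / lam := by positivity
    refine (sq_eq_sq₀ h1 h2).mp ?_
    rw [mul_pow, Real.sq_sqrt (by positivity), div_pow, hl2]
    field_simp
  calc w 0 = 1 / lam * dv 0 := by rw [hcont]; field_simp; linarith
    _ = Real.sqrt (2 / (ρ₃ * d₀ * γ₃)) * (γ₃ * dv 0) := by rw [← hs]; ring
    _ = _ := by rw [← hstress]; ring
end

section
/- Let σ > 0, α > 0, and ν, r ∈ ℝ, and let ψ(z) = (3/2)sech²(3z) (the derivative of the tanh interface profile). If μ : ℝ → ℝ is twice differentiable and bounded and satisfies −ν·σ·ψ(z) − μ''(z) = σ·ψ(z)·(r − α·μ(z)) for all z ∈ ℝ, then μ is the constant function μ(z) = (ν + r)/α. In particular the normal interface velocity satisfies ν = α·μ − r. -/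
/-- The derivative of the tanh interface profile, ψ(z) = (3/2)sech²(3z). -/
noncomputable def psiProf (z : ℝ) : ℝ := (3 / 2) * (1 / Real.cosh (3 * z)) ^ 2

/-- A bounded function with monotone derivative has zero derivative. -/
theorem bounded_convex_deriv_zero (f f' : ℝ → ℝ) (hf : ∀ z, HasDerivAt f (f' z) z)
    (hm : Monotone f') (B : ℝ) (hB : ∀ z, |f z| ≤ B) (a : ℝ) : f' a = 0 := by
  have hB0 : 0 ≤ B := (abs_nonneg _).trans (hB a)
  have hc : Continuous f := continuous_iff_continuousAt.2 fun z => (hf z).continuousAt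
  have key : ∀ z, f a + f' a * (z - a) ≤ f z := by
    intro z
    rcases lt_trichotomy a z with h | h | h
    · obtain ⟨c, hcm, hce⟩ := exists_hasDerivAt_eq_slope f f' h hc.continuousOn (fun x _ => hf x)
      have h1 := hm hcm.1.le
      have h2 : 0 < z - a := by linarith
      rw [eq_div_iff h2.ne'] at hce
      nlinarith
    · subst h; simp
    · obtain ⟨c, hcm, hce⟩ := exists_hasDerivAt_eq_slope f f' h hc.continuousOn (fun x _ => hf x)
      have h1 := hm hcm.2.le
      have h2 : 0 < a - z := by linarith
      rw [eq_div_iff h2.ne'] at hce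
      nlinarith
  by_contra hne
  have h := key (a + (2 * B + 1) / f' a)
  have e : f' a * (a + (2 * B + 1) / f' a - a) = 2 * B + 1 := by
    field_simp
    ring
  rw [e] at h
  have h1 := abs_le.1 (hB a)
  have h2 := abs_le.1 (hB (a + (2 * B + 1) / f' a))
  linarith [h1.1, h2.2]

/-- the bounded solution of the chemical potential equation
−νσψ − μ'' = σψ(r − αμ) at the reactive interface is the constant μ = (ν + r)/α;
in particular the normal velocity satisfies ν = αμ − r. -/
theorem reactive_interface_chemical_potential
    (σ α ν r : ℝ) (hσ : 0 < σ) (hα : 0 < α)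
    (μ dμ ddμ : ℝ → ℝ)
    (hμ : ∀ z : ℝ, HasDerivAt μ (dμ z) z)
    (hdμ : ∀ z : ℝ, HasDerivAt dμ (ddμ z) z)
    (hbd : ∃ M : ℝ, ∀ z : ℝ, |μ z| ≤ M)
    (hode : ∀ z : ℝ, -ν * σ * psiProf z - ddμ z = σ * psiProf z * (r - α * μ z)) :
    (∀ z : ℝ, μ z = (ν + r) / α) ∧ ν = α * μ 0 - r := by
  have hpsi : ∀ z, 0 < psiProf z := by
    intro z
    have := Real.cosh_pos (3 * z)
    unfold psiProf
    positivity
  obtain ⟨M, hM⟩ := hbd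
  set c := (ν + r) / α with hcdef
  have hcα : α * c = ν + r := by rw [hcdef]; field_simp
  have hdd : ∀ z, ddμ z = σ * psiProf z * α * (μ z - c) := by
    intro z
    linear_combination (-1 : ℝ) * hode z + σ * psiProf z * hcα
  have hw : ∀ z, HasDerivAt (fun z => μ z - c) (dμ z) z := fun z => (hμ z).sub_const c
  have hg : ∀ z, HasDerivAt (fun z => (μ z - c) * (μ z - c))
      (dμ z * (μ z - c) + (μ z - c) * dμ z) z := fun z => (hw z).mul (hw z)
  have hg2 : ∀ z, HasDerivAt (fun z => dμ z * (μ z - c) + (μ z - c) * dμ z)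
      ((ddμ z * (μ z - c) + dμ z * dμ z) + (dμ z * dμ z + (μ z - c) * ddμ z)) z :=
    fun z => ((hdμ z).mul (hw z)).add ((hw z).mul (hdμ z))
  have hpos : ∀ z, 0 ≤ σ * psiProf z * α * (μ z - c) ^ 2 := by
    intro z
    have := hpsi z
    positivity
  have hmono : Monotone (fun z => dμ z * (μ z - c) + (μ z - c) * dμ z) := by
    apply monotone_of_hasDerivAt_nonneg hg2
    intro z
    have h1 := hpos z
    simp only [Pi.zero_apply, hdd z]
    nlinarith [mul_self_nonneg (dμ z)]
  have hbdd : ∀ z, |(μ z - c) * (μ z - c)| ≤ (M + |c|) * (M + |c|) := by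
    intro z
    have h : |μ z - c| ≤ M + |c| := (abs_sub _ _).trans (by linarith [hM z])
    rw [abs_mul]
    exact mul_le_mul h h (abs_nonneg _) ((abs_nonneg _).trans h)
  have hz := bounded_convex_deriv_zero _ _ hg hmono _ hbdd
  have hmain : ∀ z, μ z = c := by
    intro z
    have h0 : HasDerivAt (fun z => dμ z * (μ z - c) + (μ z - c) * dμ z) 0 z := by
      rw [show (fun z => dμ z * (μ z - c) + (μ z - c) * dμ z) = fun _ => (0 : ℝ) from funext hz]
      exact hasDerivAt_const z 0
    have e := (hg2 z).unique h0
    rw [hdd z] at e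
    have h1 : σ * psiProf z * α * (μ z - c) ^ 2 = 0 := by
      nlinarith [mul_self_nonneg (dμ z), hpos z]
    have h2 : σ * psiProf z * α ≠ 0 := by
      have := hpsi z
      positivity
    have h3 := pow_eq_zero_iff (two_ne_zero) |>.1 ((mul_eq_zero.1 h1).resolve_left h2)
    linarith
  refine ⟨hmain, ?_⟩
  rw [hmain 0]
  linarith
end
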